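/- The Halphen system has no non-trivial rational first integral: if A, B ∈ ℂ[x₁,x₂,x₃] with B ≠ 0 and the rational function F = A/B satisfies d_H(F) = 0 (where d_H is extended to the fraction field ℂ(x₁,x₂,x₃) as a derivation), then F is a constant. -/

import Mathlib

open MvPolynomial

/-- Components of the Halphen vector field:
`V₁ = x₂x₃ − x₁(x₂+x₃)`, `V₂ = x₃x₁ − x₂(x₃+x₁)`, `V₃ = x₁x₂ − x₃(x₁+x₂)`. -/
noncomputable def V1 : MvPolynomial (Fin 3) ℂ := X 1 * X 2 - X 0 * (X 1 + X 2)
noncomputable def V2 : MvPolynomial (Fin 3) ℂ := X 2 * X 0 - X 1 * (X 2 + X 0)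
noncomputable def V3 : MvPolynomial (Fin 3) ℂ := X 0 * X 1 - X 2 * (X 0 + X 1)

/-- The Halphen derivation `d_H(F) = V₁∂₁F + V₂∂₂F + V₃∂₃F` on `ℂ[x₁,x₂,x₃]`. -/
noncomputable def dH (F : MvPolynomial (Fin 3) ℂ) : MvPolynomial (Fin 3) ℂ :=
  V1 * pderiv 0 F + V2 * pderiv 1 F + V3 * pderiv 2 F

/-!
Write `H` for the Halphen derivation. If `A / B` is a first integral in lowest terms, then `B`
divides `H B`, so `A` and `B` have a common cofactor: `H A = K A` and `H B = K B` with `deg K ≤ 1`.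

On the plane `x_i = x_j` the field `H` is tangent and becomes `x_j D` with `D = x_j U - 2 E`, where
`U = ∑ ∂_i` and `E = ∑ x_i ∂_i`. Since `x_j ∣ D x_j`, the derivation `D` does not lower the order of
divisibility by `x_j`, so `x_j` divides the restriction of `K` as soon as `A` or `B` does not vanish
on the plane; one of them does not, because `A` and `B` are coprime. Hence `K` vanishes on the
coordinate axes, and being affine it is zero.

So `H A = H B = 0`, and it remains to see that the kernel of `H` consists of constants. Now
`(2E, H, U)` is an `sl₂`-triple, and a nonzero homogeneous `G` of degree `n` with `H G = 0` is a
primitive vector of weight `2n`. If `n ≥ 1`, then `n + 1 ≤ 2n` and so `U ^ (n + 1) G ≠ 0`, whereas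
`U` lowers degrees by one.
-/

section Cofactor

variable {R A : Type*} [CommRing R] [CommRing A] [Algebra R A]

theorem pow_dvd_derivation_apply (D : Derivation R A A) {p G : A} (hp : p ∣ D p) {n : ℕ}
    (hG : p ^ n ∣ G) : p ^ n ∣ D G := by
  obtain ⟨c, rfl⟩ := hG
  have hpow : p ^ n ∣ D (p ^ n) := by
    rw [Derivation.leibniz_pow]
    cases n with
    | zero => simp
    | succ n =>
      rw [Nat.add_sub_cancel, smul_eq_mul, pow_succ]
      exact dvd_smul_of_dvd _ (mul_dvd_mul_left _ hp)
  rw [Derivation.leibniz, smul_eq_mul, smul_eq_mul]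
  exact dvd_add (dvd_mul_right _ _) (hpow.mul_left _)

variable [IsDomain A]

theorem exists_common_cofactor [DecompositionMonoid A] (D : Derivation R A A) {a b : A}
    (hab : IsRelPrime b a) (hb : b ≠ 0) (h : D a * b = a * D b) :
    ∃ K, D a = K * a ∧ D b = K * b := by
  obtain ⟨K, hK⟩ : b ∣ D b := hab.dvd_of_dvd_mul_left (Dvd.intro_left _ h)
  refine ⟨K, mul_right_cancel₀ hb ?_, by rw [hK, mul_comm]⟩
  rw [h, hK]
  ring

theorem mul_eq_mul_of_common_factor (D : Derivation R A A) {g a b : A} (hg : g ≠ 0)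
    (h : D (g * a) * (g * b) = g * a * D (g * b)) : D a * b = a * D b := by
  simp only [Derivation.leibniz, smul_eq_mul] at h
  apply mul_left_cancel₀ (pow_ne_zero 2 hg)
  linear_combination h

theorem dvd_cofactor_of_prime [WfDvdMonoid A] (D : Derivation R A A) {p G K : A} (hp : Prime p)
    (hDp : p ∣ D p) (hG : G ≠ 0) (h : p * D G = K * G) : p ∣ K := by
  by_contra hpK
  have hdvd (n : ℕ) : p ^ n ∣ G := by
    induction n with
    | zero => simp
    | succ n ih =>
      refine hp.pow_dvd_of_dvd_mul_left _ hpK ?_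
      rw [← h, pow_succ']
      exact mul_dvd_mul_left p (pow_dvd_derivation_apply D hDp ih)
  exact (FiniteMultiplicity.of_prime_left hp hG).not_pow_dvd_of_multiplicity_lt
    (Nat.lt_succ_self _) (hdvd _)

end Cofactor

section PolynomialDerivation

variable {σ R : Type*} [CommRing R]

theorem map_derivation_of_map_derivation_X {A : Type*} [CommRing A] [Algebra R A]
    (D : Derivation R (MvPolynomial σ R) (MvPolynomial σ R)) (D' : Derivation R A A)
    (φ : MvPolynomial σ R →ₐ[R] A) (h : ∀ i, φ (D (X i)) = D' (φ (X i))) (F : MvPolynomial σ R) :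
    φ (D F) = D' (φ F) := by
  induction F using MvPolynomial.induction_on with
  | C a => simp [← MvPolynomial.algebraMap_eq]
  | add p q hp hq => simp only [map_add, hp, hq]
  | mul_X p i hp => simp only [Derivation.leibniz, smul_eq_mul, map_add, map_mul, hp, h]

theorem derivation_apply_eq_sum_pderiv
    (D : Derivation R (MvPolynomial σ R) (MvPolynomial σ R)) {F : MvPolynomial σ R} {s : Finset σ}
    (hs : F.vars ⊆ s) : D F = ∑ i ∈ s, D (X i) * pderiv i F := by
  classical
  have hsum (G : MvPolynomial σ R) :
      (∑ i ∈ s, D (X i) • pderiv i : Derivation R _ _) G = ∑ i ∈ s, D (X i) * pderiv i G := by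
    rw [← Derivation.coeFnAddMonoidHom_apply, map_sum, Finset.sum_apply]
    rfl
  rw [← hsum F]
  refine derivation_eq_of_forall_mem_vars fun j hj ↦ ?_
  simp [hsum, pderiv_X, Pi.single_apply, hs hj]

variable {D : Derivation R (MvPolynomial σ R) (MvPolynomial σ R)} {F : MvPolynomial σ R}

theorem derivation_apply_eq_zero_of_isHomogeneous_zero (hF : F.IsHomogeneous 0) : D F = 0 := by
  rw [← totalDegree_zero_iff_isHomogeneous, totalDegree_eq_zero_iff_eq_C] at hF
  rw [hF, derivation_C]

variable {k n : ℕ}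

theorem isHomogeneous_derivation_apply (hD : ∀ i, (D (X i)).IsHomogeneous k)
    (hF : F.IsHomogeneous (n + 1)) : (D F).IsHomogeneous (k + n) := by
  rw [derivation_apply_eq_sum_pderiv D subset_rfl]
  exact IsHomogeneous.sum _ _ _ fun i _ ↦ (hD i).mul hF.pderiv

theorem homogeneousComponent_derivation_apply (hD : ∀ i, (D (X i)).IsHomogeneous k) :
    homogeneousComponent (k + n) (D F) = D (homogeneousComponent (n + 1) F) := by
  induction F using MvPolynomial.induction_on' with
  | add p q hp hq => simp only [map_add, hp, hq]
  | monomial s c =>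
    have hs : (monomial s c).IsHomogeneous s.degree := isHomogeneous_monomial c rfl
    rw [homogeneousComponent_of_mem hs]
    rcases hd : s.degree with _ | m <;> rw [hd] at hs
    · simp [derivation_apply_eq_zero_of_isHomogeneous_zero hs]
    · rw [homogeneousComponent_of_mem (isHomogeneous_derivation_apply hD hs)]
      by_cases h : n = m <;> simp [h]

theorem totalDegree_derivation_apply_le (hD : ∀ i, (D (X i)).IsHomogeneous (k + 1)) :
    (D F).totalDegree ≤ F.totalDegree + k := by
  nth_rw 1 [← sum_homogeneousComponent F]
  rw [map_sum]
  refine totalDegree_finsetSum_le fun i hi ↦ ?_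
  have hFi := homogeneousComponent_isHomogeneous i F
  cases i with
  | zero => rw [derivation_apply_eq_zero_of_isHomogeneous_zero hFi, totalDegree_zero]; lia
  | succ m =>
    have := (isHomogeneous_derivation_apply hD hFi).totalDegree_le
    have := Finset.mem_range.mp hi
    lia

theorem totalDegree_cofactor_le [IsDomain R] {K : MvPolynomial σ R}
    (hD : ∀ i, (D (X i)).IsHomogeneous (k + 1)) (hF : F ≠ 0) (h : D F = K * F) :
    K.totalDegree ≤ k := by
  rcases eq_or_ne K 0 with rfl | hK
  · simp
  · have := totalDegree_derivation_apply_le hD (F := F)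
    rw [h, totalDegree_mul_of_isDomain hK hF] at this
    lia

end PolynomialDerivation

section AffinePolynomial

variable {σ R : Type*} [CommSemiring R] {K : MvPolynomial σ R}

theorem eq_affine_of_totalDegree_le_one [Fintype σ] (hK : K.totalDegree ≤ 1) :
    K = C (coeff 0 K) + ∑ i, C (coeff (Finsupp.single i 1) K) * X i := by
  classical
  ext s
  simp only [coeff_add, coeff_C, coeff_sum, coeff_C_mul, coeff_X]
  rcases lt_trichotomy 1 s.degree with hs | hs | hs
  · rw [coeff_eq_zero_of_totalDegree_lt (hK.trans_lt hs)]
    have h0 : 0 ≠ s := by rintro rfl; simp at hs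
    have h1 (i : σ) : Finsupp.single i 1 ≠ s := by rintro rfl; simp at hs
    simp [h0, h1]
  · obtain ⟨i, rfl⟩ : ∃ i, s = Finsupp.single i 1 :=
      (Finsupp.sum_eq_one_iff s).mp hs.symm
    have h0 : 0 ≠ Finsupp.single i 1 := (Finsupp.single_ne_zero.mpr one_ne_zero).symm
    simp [h0, Finsupp.single_left_inj]
  · obtain rfl : s = 0 := (Finsupp.degree_eq_zero_iff s).mp (Nat.lt_one_iff.mp hs)
    simp

theorem eq_zero_of_totalDegree_le_one [Finite σ] [DecidableEq σ] (hK : K.totalDegree ≤ 1)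
    (h0 : eval 0 K = 0) (h1 : ∀ i, eval (Pi.single i 1) K = 0) : K = 0 := by
  cases nonempty_fintype σ
  have haff := eq_affine_of_totalDegree_le_one hK
  have hc0 : coeff 0 K = 0 := by simpa [constantCoeff_eq] using h0
  have hc1 (i : σ) : coeff (Finsupp.single i 1) K = 0 := by
    have := h1 i
    rw [haff] at this
    simpa [hc0, Pi.single_apply] using this
  rw [haff]
  simp [hc0, hc1]

end AffinePolynomial

section IdentifyVars

variable {σ R : Type*} [CommRing R]

theorem not_isUnit_X_sub_X [Nontrivial R] (i j : σ) : ¬ IsUnit (X i - X j : MvPolynomial σ R) :=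
  fun h ↦ by simpa using h.map (eval 0)

variable [DecidableEq σ]

/-- The substitution `X i ↦ X j`, that is, restriction of polynomial functions to the hyperplane
`x i = x j`, with the restrictions again written as polynomials in all the variables. -/
noncomputable def identifyVars (i j : σ) : MvPolynomial σ R →ₐ[R] MvPolynomial σ R :=
  aeval (Function.update X i (X j))

theorem identifyVars_X (i j l : σ) :
    identifyVars i j (X l : MvPolynomial σ R) = if l = i then X j else X l := by
  simp [identifyVars, Function.update_apply]

theorem eval_identifyVars {i j : σ} {x : σ → R} (hx : x i = x j) (F : MvPolynomial σ R) :
    eval x (identifyVars i j F) = eval x F := by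
  have : (aeval x).comp (identifyVars i j) = (aeval x : MvPolynomial σ R →ₐ[R] R) := by
    ext l
    by_cases hl : l = i <;> simp [identifyVars_X, hl, hx]
  exact DFunLike.congr_fun this F

theorem X_sub_X_dvd_of_identifyVars_eq_zero {i j : σ} {F : MvPolynomial σ R}
    (hF : identifyVars i j F = 0) : X i - X j ∣ F := by
  let q := Ideal.Quotient.mkₐ R (Ideal.span {(X i - X j : MvPolynomial σ R)})
  have hq : q.comp (identifyVars i j) = q := by
    ext l
    by_cases hl : l = i
    · subst hl
      simpa [q, identifyVars_X, eq_comm (a := Ideal.Quotient.mk _ (X j))] using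
        Ideal.Quotient.eq.mpr (Ideal.mem_span_singleton_self _)
    · simp [identifyVars_X, hl]
  rw [← Ideal.mem_span_singleton, ← Ideal.Quotient.eq_zero_iff_mem]
  simpa [hF, q] using (DFunLike.congr_fun hq F).symm

theorem identifyVars_ne_zero_of_isRelPrime [Nontrivial R] {F G : MvPolynomial σ R}
    (h : IsRelPrime F G) (i j : σ) : identifyVars i j F ≠ 0 ∨ identifyVars i j G ≠ 0 := by
  by_contra! h0
  exact not_isUnit_X_sub_X i j (h (X_sub_X_dvd_of_identifyVars_eq_zero h0.1)
    (X_sub_X_dvd_of_identifyVars_eq_zero h0.2))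

end IdentifyVars

section Sl2

variable (σ R : Type*) [CommRing R]

/-- The derivation `U = ∑ i, ∂_i`, the infinitesimal generator of simultaneous translations. -/
noncomputable def translationDerivation : Derivation R (MvPolynomial σ R) (MvPolynomial σ R) :=
  mkDerivation R fun _ ↦ 1

/-- The Euler derivation `E = ∑ i, x_i ∂_i`, which multiplies homogeneous polynomials by their
degree. -/
noncomputable def eulerDerivation : Derivation R (MvPolynomial σ R) (MvPolynomial σ R) :=
  mkDerivation R X

/-- The Halphen derivation over an arbitrary commutative ring. Indices are taken modulo 3, so that
`i + 1` and `i + 2` are the two indices other than `i`. -/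
noncomputable def halphenDerivation :
    Derivation R (MvPolynomial (Fin 3) R) (MvPolynomial (Fin 3) R) :=
  mkDerivation R fun i ↦ X (i + 1) * X (i + 2) - X i * (X (i + 1) + X (i + 2))

variable {σ R}

theorem translationDerivation_X (i : σ) : translationDerivation σ R (X i) = 1 :=
  mkDerivation_X ..

theorem eulerDerivation_X (i : σ) : eulerDerivation σ R (X i) = X i :=
  mkDerivation_X ..

theorem halphenDerivation_X (i : Fin 3) : halphenDerivation R (X i) =
    X (i + 1) * X (i + 2) - X i * (X (i + 1) + X (i + 2)) :=
  mkDerivation_X ..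

theorem eulerDerivation_apply_of_isHomogeneous [Finite σ] {F : MvPolynomial σ R} {n : ℕ}
    (hF : F.IsHomogeneous n) : eulerDerivation σ R F = n • F := by
  cases nonempty_fintype σ
  rw [derivation_apply_eq_sum_pderiv _ (Finset.subset_univ _), ← hF.sum_X_mul_pderiv]
  simp only [eulerDerivation_X]

theorem translationDerivation_pow_apply_eq_zero {F : MvPolynomial σ R} {n : ℕ}
    (hF : F.IsHomogeneous n) :
    (LieModule.toEnd R _ (MvPolynomial σ R) (translationDerivation σ R) ^ (n + 1)) F = 0 := by
  induction n generalizing F with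
  | zero => simpa using derivation_apply_eq_zero_of_isHomogeneous_zero hF
  | succ n ih =>
    have hUF : (translationDerivation σ R F).IsHomogeneous n := by
      simpa using! isHomogeneous_derivation_apply (k := 0)
        (fun i ↦ by rw [translationDerivation_X]; exact isHomogeneous_one σ R) hF
    rw [pow_succ, Module.End.mul_apply]
    exact ih hUF

theorem isHomogeneous_halphenDerivation_X (i : Fin 3) :
    (halphenDerivation R (X i)).IsHomogeneous 2 := by
  rw [halphenDerivation_X]
  have hX (j : Fin 3) : (X j : MvPolynomial (Fin 3) R).IsHomogeneous 1 := isHomogeneous_X R j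
  exact ((hX _).mul (hX _)).sub ((hX _).mul ((hX _).add (hX _)))

variable [CharZero R]

theorem isSl2Triple_halphenDerivation : IsSl2Triple (2 • eulerDerivation (Fin 3) R)
    (halphenDerivation R) (translationDerivation (Fin 3) R) where
  h_ne_zero h := by
    have := DFunLike.congr_fun h (X 0)
    simpa [eulerDerivation_X] using congrArg (eval 1) this
  lie_e_f := derivation_ext fun i ↦ by
    simp only [Derivation.commutator_apply, translationDerivation_X, Derivation.map_one_eq_zero,
      halphenDerivation_X, map_sub, map_add, Derivation.leibniz, smul_eq_mul, Derivation.coe_smul,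
      Pi.smul_apply, eulerDerivation_X, nsmul_eq_mul, Nat.cast_ofNat]
    ring
  lie_h_e_nsmul := derivation_ext fun i ↦ by
    simp only [nsmul_lie, Derivation.coe_smul, Pi.smul_apply, Derivation.commutator_apply,
      halphenDerivation_X, map_sub, map_add, Derivation.leibniz, eulerDerivation_X, smul_eq_mul,
      nsmul_eq_mul, Nat.cast_ofNat]
    ring
  lie_h_f_nsmul := derivation_ext fun i ↦ by
    simp [Derivation.commutator_apply, translationDerivation_X, eulerDerivation_X]

variable [IsDomain R]

theorem eq_zero_of_halphenDerivation_eq_zero_of_isHomogeneous {G : MvPolynomial (Fin 3) R} {n : ℕ}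
    (hn : n ≠ 0) (hG : G.IsHomogeneous n) (h : halphenDerivation R G = 0) : G = 0 := by
  by_contra hG0
  have hprim :
      (isSl2Triple_halphenDerivation (R := R)).HasPrimitiveVectorWith G ((2 * n : ℕ) : R) :=
    { ne_zero := hG0
      lie_h := by
        rw [Derivation.bracket_eq_fun, Derivation.smul_apply,
          eulerDerivation_apply_of_isHomogeneous hG, smul_smul, Nat.cast_smul_eq_nsmul]
      lie_e := h }
  exact hprim.pow_toEnd_f_ne_zero_of_eq_nat rfl (by lia)
    (translationDerivation_pow_apply_eq_zero hG)

theorem eq_C_of_halphenDerivation_eq_zero {G : MvPolynomial (Fin 3) R}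
    (h : halphenDerivation R G = 0) : ∃ c, G = C c := by
  have hcomp (n : ℕ) : homogeneousComponent (n + 1) G = 0 := by
    refine eq_zero_of_halphenDerivation_eq_zero_of_isHomogeneous n.succ_ne_zero
      (homogeneousComponent_isHomogeneous _ _) ?_
    rw [← homogeneousComponent_derivation_apply isHomogeneous_halphenDerivation_X, h, map_zero]
  refine ⟨coeff 0 G, ?_⟩
  nth_rw 1 [← sum_homogeneousComponent G]
  rw [Finset.sum_range_succ', homogeneousComponent_zero]
  simp [hcomp]

end Sl2

section HalphenCofactor

variable (R : Type*) [CommRing R]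

/-- The derivation `x_j U - 2 E`; on each plane `x_i = x_j` with `i ≠ j`, the Halphen derivation is
`x_j` times it. -/
noncomputable def planeDerivation (j : Fin 3) :
    Derivation R (MvPolynomial (Fin 3) R) (MvPolynomial (Fin 3) R) :=
  (X j : MvPolynomial (Fin 3) R) • translationDerivation (Fin 3) R - 2 • eulerDerivation (Fin 3) R

variable {R}

theorem planeDerivation_X (j l : Fin 3) :
    planeDerivation R j (X l : MvPolynomial (Fin 3) R) = X j - 2 * X l := by
  simp [planeDerivation, translationDerivation_X, eulerDerivation_X]

theorem identifyVars_halphenDerivation (k : Fin 3) (F : MvPolynomial (Fin 3) R) :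
    identifyVars (k + 1) (k + 2) (halphenDerivation R F) =
      X (k + 2) * planeDerivation R (k + 2) (identifyVars (k + 1) (k + 2) F) := by
  refine map_derivation_of_map_derivation_X _
    ((X (k + 2) : MvPolynomial (Fin 3) R) • planeDerivation R (k + 2)) _ (fun l ↦ ?_) F
  fin_cases k <;> fin_cases l <;>
    simp only [halphenDerivation_X, identifyVars_X, planeDerivation_X, map_sub, map_mul, map_add,
      Derivation.coe_smul, Pi.smul_apply, smul_eq_mul, Fin.zero_eta, Fin.mk_one, Fin.reduceFinMk,
      Fin.isValue, Fin.reduceAdd, Fin.reduceEq, zero_add, zero_ne_one, one_ne_zero, ↓reduceIte] <;>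
    ring

variable [IsDomain R] [UniqueFactorizationMonoid R] {G K : MvPolynomial (Fin 3) R}

theorem X_dvd_identifyVars_cofactor {k : Fin 3} (hG : identifyVars (k + 1) (k + 2) G ≠ 0)
    (h : halphenDerivation R G = K * G) : X (k + 2) ∣ identifyVars (k + 1) (k + 2) K := by
  refine dvd_cofactor_of_prime (planeDerivation R (k + 2)) X_prime ⟨-1, ?_⟩ hG ?_
  · rw [planeDerivation_X]
    ring
  · rw [← identifyVars_halphenDerivation, h, map_mul]

theorem eval_single_cofactor {k : Fin 3} (hG : identifyVars (k + 1) (k + 2) G ≠ 0)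
    (h : halphenDerivation R G = K * G) (t : R) : eval (Pi.single k t) K = 0 := by
  have h1 : k + 1 ≠ k := by fin_cases k <;> decide
  have h2 : k + 2 ≠ k := by fin_cases k <;> decide
  have hx : (Pi.single k t : Fin 3 → R) (k + 1) = (Pi.single k t : Fin 3 → R) (k + 2) := by
    simp [h1, h2]
  obtain ⟨Q, hQ⟩ := X_dvd_identifyVars_cofactor hG h
  rw [← eval_identifyVars hx, hQ, map_mul, eval_X, Pi.single_eq_of_ne h2, zero_mul]

theorem common_cofactor_eq_zero {A B : MvPolynomial (Fin 3) R} (hAB : IsRelPrime A B) (hA0 : A ≠ 0)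
    (hA : halphenDerivation R A = K * A) (hB : halphenDerivation R B = K * B) : K = 0 := by
  have haxis (k : Fin 3) (t : R) : eval (Pi.single k t) K = 0 := by
    rcases identifyVars_ne_zero_of_isRelPrime hAB (k + 1) (k + 2) with h | h
    · exact eval_single_cofactor h hA t
    · exact eval_single_cofactor h hB t
  have hdeg : K.totalDegree ≤ 1 :=
    totalDegree_cofactor_le isHomogeneous_halphenDerivation_X hA0 hA
  exact eq_zero_of_totalDegree_le_one hdeg (by simpa using haxis 0 0) fun i ↦ haxis i 1

end HalphenCofactor

theorem dH_eq_halphenDerivation (F : MvPolynomial (Fin 3) ℂ) : dH F = halphenDerivation ℂ F := by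
  rw [derivation_apply_eq_sum_pderiv _ (Finset.subset_univ _), Fin.sum_univ_three]
  simp only [halphenDerivation_X]
  rfl

theorem halphen_no_rational_first_integral_general {𝕜 : Type*} [Field 𝕜] [CharZero 𝕜]
    (A B : MvPolynomial (Fin 3) 𝕜) (hB : B ≠ 0)
    (hint : halphenDerivation 𝕜 A * B = A * halphenDerivation 𝕜 B) : ∃ c : 𝕜, A = C c * B := by
  obtain ⟨b, a, g, hrel, rfl, rfl⟩ := UniqueFactorizationMonoid.exists_reduced_factors B hB A
  obtain ⟨hg, hb⟩ := mul_ne_zero_iff.mp hB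
  obtain ⟨K, hKa, hKb⟩ := exists_common_cofactor _ hrel hb (mul_eq_mul_of_common_factor _ hg hint)
  obtain rfl : K = 0 := common_cofactor_eq_zero hrel hb hKb hKa
  obtain ⟨c, rfl⟩ := eq_C_of_halphenDerivation_eq_zero (hKa.trans (zero_mul a))
  obtain ⟨e, rfl⟩ := eq_C_of_halphenDerivation_eq_zero (hKb.trans (zero_mul b))
  have he : e ≠ 0 := fun h ↦ hb (by rw [h, map_zero])
  exact ⟨c / e, by rw [mul_left_comm, ← C_mul, div_mul_cancel₀ c he]⟩

/-- The Halphen system has no non-trivial rational first integral: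
if `B ≠ 0` and the rational function `F = A/B` satisfies `d_H(F) = 0` in the fraction
field `ℂ(x₁,x₂,x₃)` — by the quotient rule `d_H(A/B) = (d_H(A)·B − A·d_H(B))/B²`, this
is equivalent to `d_H(A)·B = A·d_H(B)` — then `F = A/B` is a constant, i.e. `A = c·B`
for some `c ∈ ℂ`. -/
theorem halphen_no_rational_first_integral
    (A B : MvPolynomial (Fin 3) ℂ) (hB : B ≠ 0)
    (hint : dH A * B = A * dH B) :
    ∃ c : ℂ, A = C c * B := by
  simp only [dH_eq_halphenDerivation] at hint
  exact halphen_no_rational_first_integral_general A B hB hint
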